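/- Let d ≥ 1, R > 0, b > 0, q > 0, let γ ∈ ℝᵈ, let σ = (σ_{ij}) be a symmetric positive semidefinite d×d real matrix, and let ν be a finite Borel measure on ℝᵈ with ν({0}) = 0 and ∫_{ℝᵈ} |z| dν(z) < ∞. Let W : ℝᵈ → ℝ be continuous with support contained in the closed ball B̄_{R+b/2}(0), twice continuously differentiable on the open ball B_R(0), and suppose that for every x ∈ B_R(0): q·W(x) − (1/2)·∑_{i,j} σ_{ij} ∂²_{ij}W(x) − ⟨∇W(x), γ⟩ − ∫_{ℝᵈ} ( W(x+z) − W(x) − ⟨∇W(x), z⟩ ) dν(z) ≤ 0. If in addition W(x) ≤ 0 for every x with R ≤ |x| < R + b/2, then W(x) ≤ 0 for every x ∈ ℝᵈ. -/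

import Mathlib

open MeasureTheory Metric
open scoped RealInnerProductSpace

/-- At a local maximum, the second derivative is negative semidefinite. -/
theorem IsLocalMax.fderiv_fderiv_apply_self_nonpos {E : Type*} [NormedAddCommGroup E]
    [NormedSpace ℝ E] {f : E → ℝ} {x : E} (hmax : IsLocalMax f x) (hf : ContDiffAt ℝ 2 f x)
    (v : E) : fderiv ℝ (fderiv ℝ f) x v v ≤ 0 := by
  by_contra! hpos
  set g : ℝ → ℝ := fun t => f (x + t • v) with hg
  have hline : ∀ t : ℝ, HasDerivAt (fun t : ℝ => x + t • v) v t := fun t => by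
    simpa using ((hasDerivAt_id t).smul_const v).const_add x
  have htend : Filter.Tendsto (fun t : ℝ => x + t • v) (nhds 0) (nhds x) := by
    simpa using (hline 0).continuousAt.tendsto
  have hderiv : deriv g =ᶠ[nhds 0] fun t => fderiv ℝ f (x + t • v) v := by
    filter_upwards [htend.eventually (hf.eventually (by simp))] with t ht
    exact ((ht.differentiableAt (by simp)).hasFDerivAt.comp_hasDerivAt t (hline t)).deriv
  have hdf : HasFDerivAt (fderiv ℝ f) (fderiv ℝ (fderiv ℝ f) x) x :=
    ((hf.fderiv_right (m := 1) (by norm_num)).differentiableAt (by simp)).hasFDerivAt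
  have hcomp : HasDerivAt (fun t : ℝ => fderiv ℝ f (x + t • v)) (fderiv ℝ (fderiv ℝ f) x v) 0 :=
    hdf.comp_hasDerivAt_of_eq (0 : ℝ) (hline 0) (by simp)
  have hsecond : deriv (deriv g) 0 = fderiv ℝ (fderiv ℝ f) x v v := by
    rw [hderiv.deriv_eq]
    have happly := hcomp.clm_apply (hasDerivAt_const (0 : ℝ) v)
    rw [map_zero, add_zero] at happly
    exact happly.deriv
  have hgmax : IsLocalMax g 0 := by
    filter_upwards [htend.eventually hmax] with t ht
    simpa [hg] using ht
  have hgcont : ContinuousAt g 0 := by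
    have hfx : ContinuousAt f (x + (0 : ℝ) • v) := by simpa using hf.continuousAt
    exact hfx.comp (f := fun t : ℝ => x + t • v) (hline 0).continuousAt
  have hgmin : IsLocalMin g 0 :=
    isLocalMin_of_deriv_deriv_pos (hsecond ▸ hpos) hgmax.deriv_eq_zero hgcont
  have hconst : g =ᶠ[nhds 0] fun _ => g 0 := by
    filter_upwards [hgmax, hgmin] with t h₁ h₂ using le_antisymm h₁ h₂
  have : deriv (deriv g) 0 = 0 := by
    rw [hconst.deriv.deriv_eq]
    simp
  exact hpos.ne' (hsecond ▸ this)

/-- The contraction of a positive semidefinite matrix with a negative semidefinite bilinear form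
is nonpositive. -/
theorem Matrix.PosSemidef.sum_sum_mul_apply_nonpos {ι E : Type*} [Fintype ι]
    [AddCommGroup E] [Module ℝ E] {σ : Matrix ι ι ℝ} (hσ : σ.PosSemidef)
    (B : E →ₗ[ℝ] E →ₗ[ℝ] ℝ) (hB : ∀ v, B v v ≤ 0) (e : ι → E) :
    ∑ i, ∑ j, σ i j * B (e i) (e j) ≤ 0 := by
  classical
  obtain ⟨A, rfl⟩ : ∃ A : Matrix ι ι ℝ, σ = A.conjTranspose * A := by
    open scoped MatrixOrder in
    exact CStarAlgebra.nonneg_iff_eq_star_mul_self.mp hσ.nonneg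
  have : ∑ i, ∑ j, (A.conjTranspose * A) i j * B (e i) (e j)
      = ∑ k, B (∑ i, A k i • e i) (∑ j, A k j • e j) := by
    simp only [Matrix.mul_apply, Matrix.conjTranspose_apply, star_trivial, map_sum, map_smul,
      LinearMap.sum_apply, LinearMap.smul_apply, smul_eq_mul, Finset.sum_mul, Finset.mul_sum]
    rw [Finset.sum_comm_cycle]
    refine Finset.sum_congr rfl fun k _ => ?_
    rw [Finset.sum_comm]
    refine Finset.sum_congr rfl fun j _ => Finset.sum_congr rfl fun i _ => ?_
    ring
  rw [this]
  exact Finset.sum_nonpos fun k _ => hB _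

/-- Comparison principle for the elliptic integro-differential operator: a subsolution
that is nonpositive on the annulus `R ≤ |x| < R + b/2` is nonpositive everywhere. -/
theorem comparison_principle_integro_differential
    (d : ℕ) (hd : 1 ≤ d) (R b q : ℝ) (hR : 0 < R) (hb : 0 < b) (hq : 0 < q)
    (γ : EuclideanSpace ℝ (Fin d)) (σ : Matrix (Fin d) (Fin d) ℝ) (hσ : σ.PosSemidef)
    (ν : Measure (EuclideanSpace ℝ (Fin d))) [IsFiniteMeasure ν]
    (hν0 : ν {0} = 0) (hν1 : Integrable (fun z => ‖z‖) ν)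
    (W : EuclideanSpace ℝ (Fin d) → ℝ) (hWc : Continuous W)
    (hWsupp : Function.support W ⊆ closedBall 0 (R + b / 2))
    (hWd : ContDiffOn ℝ 2 W (ball 0 R))
    (hsub : ∀ x ∈ ball (0 : EuclideanSpace ℝ (Fin d)) R,
      q * W x
        - (1 / 2) * ∑ i, ∑ j, σ i j *
            fderiv ℝ (fun y => fderiv ℝ W y (EuclideanSpace.single j 1)) x
              (EuclideanSpace.single i 1)
        - ⟪gradient W x, γ⟫
        - ∫ z, (W (x + z) - W x - ⟪gradient W x, z⟫) ∂ν ≤ 0)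
    (hbdry : ∀ x : EuclideanSpace ℝ (Fin d), R ≤ ‖x‖ → ‖x‖ < R + b / 2 → W x ≤ 0) :
    ∀ x : EuclideanSpace ℝ (Fin d), W x ≤ 0 := by
  have hball : Function.support W ⊆ ball 0 (R + b / 2) := by
    rw [← interior_closedBall _ (by positivity)]
    exact hWc.isOpen_support.subset_interior_iff.mpr hWsupp
  have hout : ∀ x, R ≤ ‖x‖ → W x ≤ 0 := by
    intro x hx
    by_contra! hpos
    have hx' := hball (Function.mem_support.mpr hpos.ne')
    exact hpos.not_ge (hbdry x hx (by simpa using hx'))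
  by_contra! hex
  obtain ⟨x₀, hx₀⟩ := hex
  have hin : ∀ x, 0 < W x → x ∈ ball (0 : EuclideanSpace ℝ (Fin d)) R := by
    intro x hx
    rw [mem_ball_zero_iff]
    by_contra! h
    exact hx.not_ge (hout x h)
  obtain ⟨m, -, hm⟩ := (isCompact_closedBall (0 : EuclideanSpace ℝ (Fin d)) R).exists_isMaxOn
    ⟨0, by simp [hR.le]⟩ hWc.continuousOn
  have hmpos : 0 < W m := hx₀.trans_le (hm (ball_subset_closedBall (hin x₀ hx₀)))
  have hmax : ∀ x, W x ≤ W m := by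
    intro x
    rcases le_or_gt (W x) 0 with h | h
    · exact h.trans hmpos.le
    · exact hm (ball_subset_closedBall (hin x h))
  have hlocal : IsLocalMax W m := Filter.Eventually.of_forall hmax
  have hmR := hin m hmpos
  have hC : ContDiffAt ℝ 2 W m := hWd.contDiffAt (isOpen_ball.mem_nhds hmR)
  have hgrad : gradient W m = 0 := by simp [gradient, hlocal.fderiv_eq_zero]
  have hdiff : DifferentiableAt ℝ (fderiv ℝ W) m :=
    (hC.fderiv_right (m := 1) (by norm_num)).differentiableAt (by simp)
  have hhess : ∀ v w, fderiv ℝ (fun y => fderiv ℝ W y v) m w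
      = fderiv ℝ (fderiv ℝ W) m w v := by
    intro v w
    simp [fderiv_clm_apply hdiff (differentiableAt_const v)]
  have htrace := hσ.sum_sum_mul_apply_nonpos
    ((ContinuousLinearMap.coeLM ℝ).comp (fderiv ℝ (fderiv ℝ W) m).toLinearMap)
    (fun v => hlocal.fderiv_fderiv_apply_self_nonpos hC v)
    (fun i => EuclideanSpace.single i (1 : ℝ))
  have hint : ∫ z, (W (m + z) - W m) ∂ν ≤ 0 :=
    integral_nonpos fun z => sub_nonpos.mpr (hmax (m + z))
  have key := hsub m hmR
  simp only [hhess, hgrad, inner_zero_left, sub_zero] at key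
  simp only [LinearMap.comp_apply, ContinuousLinearMap.coe_coe,
    ContinuousLinearMap.coeLM_apply] at htrace
  nlinarith [mul_pos hq hmpos]
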